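/- Let N ≥ 1, p ∈ (0,1), k₁ > 0, c > 0, R > 0, x₀ ∈ ℝ^N, and set C_{N,p} := (1-p)²/(2(N(1-p)+2p)). Then there is no function u ∈ C(B̄_R(x₀)) ∩ C²(B_R(x₀)) such that u > 0 in B_R(x₀), Δu(x) ≥ k₁ c · u(x)^p for all x ∈ B_R(x₀), and u(x) ≤ (k₁ C_{N,p} c R²)^{1/(1-p)} for all x ∈ ∂B_R(x₀). (Nonexistence lemma underlying the proof of Theorem 3.2.) -/

import Mathlib

/-!
The proof compares `u` with the explicit radial function `w x = (K * ‖x - x₀‖ ^ 2) ^ β`, where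
`β = 1 / (1 - p) > 1` and `K = k₁ * C_{N,p} * c`. The constant `C_{N,p}` is chosen so that
`Δ w = k₁ * c * w ^ p` on the whole space, `w` vanishes at `x₀`, and on the sphere of radius `R`
the function `w` equals the assumed upper bound for `u`.

If `u` existed, then `u - w` would be continuous on the closed ball, nonpositive on its boundary and
positive at the centre, hence it would attain a positive maximum at an interior point `z`.
There every second directional derivative of `u - w` is nonpositive (`snd_deriv_nonpos_of_max`), so
`Δ u z ≤ Δ w z = k₁ * c * w z ^ p < k₁ * c * u z ^ p`, contradicting the differential inequality.

All derivatives are taken along coordinate lines. The function `w` need not be smooth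
at `x₀`, but since `β > 1` its second derivative along a line exists there and equals
zero (`barrier_snd_deriv`).
-/

open MeasureTheory Metric Set Bornology

/-- The Laplacian of `u : ℝ^N → ℝ`, as the sum of the second partial derivatives. -/
noncomputable def lap {N : ℕ} (u : EuclideanSpace ℝ (Fin N) → ℝ)
    (x : EuclideanSpace ℝ (Fin N)) : ℝ :=
  ∑ i : Fin N,
    fderiv ℝ (fun y => fderiv ℝ u y (EuclideanSpace.single i 1)) x (EuclideanSpace.single i 1)

/-- The second-derivative test in necessary form: at a local maximum the second derivative, if
it exists, is nonpositive. -/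
lemma snd_deriv_nonpos_of_max {f f' : ℝ → ℝ} {d : ℝ} (hmax : IsLocalMax f 0)
    (hf : ∀ᶠ t in nhds 0, HasDerivAt f (f' t) t) (hf' : HasDerivAt f' d 0) : d ≤ 0 := by
  by_contra! hd
  have hderiv : deriv f =ᶠ[nhds 0] f' := hf.mono fun t ht => ht.deriv
  have h2 : deriv (deriv f) 0 = d := by rw [hderiv.deriv_eq, hf'.deriv]
  have hmin : IsLocalMin f 0 :=
    isLocalMin_of_deriv_deriv_pos (by rw [h2]; exact hd) hmax.deriv_eq_zero
      hf.self_of_nhds.continuousAt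
  -- A point that is both a local minimum and a local maximum has a constant neighbourhood.
  have hconst : f =ᶠ[nhds 0] fun _ => f 0 := by
    filter_upwards [hmin, hmax] with t h1 h2 using le_antisymm h2 h1
  have h3 : deriv (deriv f) 0 = 0 := by
    rw [hconst.deriv.deriv_eq]; simp
  linarith

/-- First derivative of `t ↦ A * (Q + 2 * t * a + t ^ 2) ^ β`, the restriction of the radial barrier
to a coordinate line through a point at squared distance `Q` from the centre. -/
lemma barrier_fst_deriv (A Q a β t : ℝ) (hβ : 1 < β) :
    HasDerivAt (fun t : ℝ => A * (Q + 2 * t * a + t ^ 2) ^ β)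
      (A * ((2 * a + 2 * t) * β * (Q + 2 * t * a + t ^ 2) ^ (β - 1))) t := by
  have hq : HasDerivAt (fun t : ℝ => Q + 2 * t * a + t ^ 2) (2 * a + 2 * t) t := by
    have h := ((((hasDerivAt_id t).const_mul 2).mul_const a).const_add Q).add
      ((hasDerivAt_id t).pow 2)
    exact h.congr_deriv (by simp)
  exact (hq.rpow_const (Or.inr hβ.le)).const_mul A

/-- Second derivative at `0` of the restricted barrier. In the degenerate case `Q = 0` (the point is
the centre, so `a = 0`) the formula evaluates to `0`. -/
lemma barrier_snd_deriv (A Q a β : ℝ) (hβ : 1 < β) (hQa : Q = 0 → a = 0) :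
    HasDerivAt (fun t : ℝ => A * ((2 * a + 2 * t) * β * (Q + 2 * t * a + t ^ 2) ^ (β - 1)))
      (A * β * (4 * (β - 1) * Q ^ (β - 2) * a ^ 2 + 2 * Q ^ (β - 1))) 0 := by
  by_cases hQ : Q = 0
  · have ha := hQa hQ
    subst hQ ha
    have hβ0 : β - 1 ≠ 0 := by linarith
    rw [hasDerivAt_iff_tendsto_slope_zero]
    -- The difference quotient at `t ≠ 0` is `2 * A * β * (t ^ 2) ^ (β - 1)`, continuous at `0`.
    have hcont : ContinuousAt (fun t : ℝ => 2 * A * β * (t ^ 2) ^ (β - 1)) 0 := by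
      refine ContinuousAt.mul continuousAt_const ?_
      exact (continuousAt_id.pow 2).rpow_const (Or.inr (by linarith))
    have h := hcont.tendsto.mono_left (nhdsWithin_le_nhds (s := {0}ᶜ))
    refine (h.congr' ?_).trans (le_of_eq ?_)
    · filter_upwards [self_mem_nhdsWithin] with t ht
      have ht : t ≠ 0 := ht
      simp
      field_simp
    · simp [Real.zero_rpow hβ0]
  · have hlin : HasDerivAt (fun t : ℝ => (2 * a + 2 * t) * β) (2 * β) 0 := by
      have h := (((hasDerivAt_id (0 : ℝ)).const_mul 2).const_add (2 * a)).mul_const β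
      exact h.congr_deriv (by simp)
    have hq : HasDerivAt (fun t : ℝ => Q + 2 * t * a + t ^ 2) (2 * a) 0 := by
      have h := ((((hasDerivAt_id (0 : ℝ)).const_mul 2).mul_const a).const_add Q).add
        ((hasDerivAt_id (0 : ℝ)).pow 2)
      exact h.congr_deriv (by simp)
    have hr := hq.rpow_const (p := β - 1) (Or.inl (by simpa using hQ))
    have h := (hlin.mul hr).const_mul A
    refine h.congr_deriv ?_
    simp only [mul_zero, zero_mul, add_zero, ne_eq, OfNat.ofNat_ne_zero, not_false_eq_true,
      zero_pow]
    rw [show β - 1 - 1 = β - 2 by ring]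
    ring

/-- Summing the second derivatives of the barrier over all coordinates gives
`k * (w ^ p)`, which is where the value of `C_{N,p}` comes from. -/
lemma barrier_laplacian {N : ℕ} (hN : 1 ≤ N) (p k Q : ℝ) (hp : 0 < p) (hp1 : p < 1) (hk : 0 < k)
    (hQ : 0 ≤ Q) (y : Fin N → ℝ) (hy : ∑ i, y i ^ 2 = Q) (K : ℝ)
    (hK : K = k * ((1 - p) ^ 2 / (2 * ((N : ℝ) * (1 - p) + 2 * p)))) (β : ℝ)
    (hβ : β = 1 / (1 - p)) :
    ∑ i, K ^ β * β * (4 * (β - 1) * Q ^ (β - 2) * y i ^ 2 + 2 * Q ^ (β - 1)) =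
      k * (K ^ β * Q ^ β) ^ p := by
  have h1p : 0 < 1 - p := by linarith
  have hN' : (1 : ℝ) ≤ N := by exact_mod_cast hN
  have hden : 0 < (N : ℝ) * (1 - p) + 2 * p := by positivity
  have hKpos : 0 < K := by rw [hK]; positivity
  have hβp : β * p = β - 1 := by rw [hβ]; field_simp; ring
  have hβ1 : β - 1 = p / (1 - p) := by rw [hβ]; field_simp; ring
  have hβ1' : 0 < β - 1 := by rw [hβ1]; positivity
  have hQQ : Q ^ (β - 2) * Q = Q ^ (β - 1) := by
    rcases hQ.eq_or_lt with h | h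
    · rw [← h, mul_zero, Real.zero_rpow hβ1'.ne']
    · rw [show β - 1 = (β - 2) + 1 by ring, Real.rpow_add h, Real.rpow_one]
  have hKK : K ^ β = K ^ (β - 1) * K := by
    nth_rewrite 1 [show β = (β - 1) + 1 by ring]
    rw [Real.rpow_add hKpos, Real.rpow_one]
  have hsum : ∑ i, K ^ β * β * (4 * (β - 1) * Q ^ (β - 2) * y i ^ 2 + 2 * Q ^ (β - 1)) =
      K ^ β * β * (4 * (β - 1) + 2 * N) * Q ^ (β - 1) := by
    rw [← Finset.mul_sum, Finset.sum_add_distrib, ← Finset.mul_sum, hy]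
    simp only [Finset.sum_const, Finset.card_univ, Fintype.card_fin, nsmul_eq_mul]
    rw [← hQQ]; ring
  have hconst : K * β * (4 * (β - 1) + 2 * N) = k := by
    rw [hβ1, hK, hβ]; field_simp; ring
  rw [hsum, Real.mul_rpow (by positivity) (by positivity), ← Real.rpow_mul hKpos.le,
    ← Real.rpow_mul hQ, hβp, hKK]
  linear_combination K ^ (β - 1) * Q ^ (β - 1) * hconst

/-- **Nonexistence lemma (underlying the proof of Theorem 3.2).** There is no
`u ∈ C(B̄_R(x₀)) ∩ C²(B_R(x₀))` with `u > 0` in `B_R(x₀)`, `Δu ≥ k₁ c u^p` in `B_R(x₀)` and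
`u ≤ (k₁ C_{N,p} c R²)^{1/(1-p)}` on `∂B_R(x₀)`. -/
theorem no_positive_subfunction_on_ball {N : ℕ} (hN : 1 ≤ N)
    (p k₁ c R : ℝ) (hp : 0 < p) (hp1 : p < 1) (hk₁ : 0 < k₁) (hc : 0 < c) (hR : 0 < R)
    (x₀ : EuclideanSpace ℝ (Fin N)) :
    ¬ ∃ u : EuclideanSpace ℝ (Fin N) → ℝ,
        ContinuousOn u (closedBall x₀ R) ∧
        ContDiffOn ℝ 2 u (ball x₀ R) ∧
        (∀ x ∈ ball x₀ R, 0 < u x) ∧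
        (∀ x ∈ ball x₀ R, k₁ * c * u x ^ p ≤ lap u x) ∧
        (∀ x ∈ sphere x₀ R,
          u x ≤ (k₁ * ((1 - p) ^ 2 / (2 * ((N : ℝ) * (1 - p) + 2 * p))) * c * R ^ 2)
            ^ (1 / (1 - p))) := by
  rintro ⟨u, hcont, hdiff, hpos, hlap, hbd⟩
  have h1p : 0 < 1 - p := by linarith
  have hN' : (1 : ℝ) ≤ N := by exact_mod_cast hN
  have hden : 0 < (N : ℝ) * (1 - p) + 2 * p := by positivity
  obtain ⟨β, hβ⟩ : ∃ β, β = 1 / (1 - p) := ⟨_, rfl⟩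
  obtain ⟨K, hK⟩ : ∃ K, K = k₁ * c * ((1 - p) ^ 2 / (2 * ((N : ℝ) * (1 - p) + 2 * p))) :=
    ⟨_, rfl⟩
  have hKpos : 0 < K := by rw [hK]; positivity
  have hβ1 : 1 < β := by rw [hβ, lt_div_iff₀ h1p]; linarith
  have hβpos : 0 < β := by linarith
  set w : EuclideanSpace ℝ (Fin N) → ℝ := fun x => K ^ β * (‖x - x₀‖ ^ 2) ^ β with hw
  have hwcont : Continuous w := by
    refine continuous_const.mul (Continuous.rpow_const ?_ fun _ => Or.inr hβpos.le)
    fun_prop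
  obtain ⟨z, hz, hzmax⟩ := (isCompact_closedBall x₀ R).exists_isMaxOn
    ⟨x₀, mem_closedBall_self hR.le⟩ (hcont.sub hwcont.continuousOn)
  have hzpos : w z < u z := by
    have h := hzmax (mem_closedBall_self hR.le : x₀ ∈ closedBall x₀ R)
    have h0 := hpos x₀ (mem_ball_self hR)
    have hw0 : w x₀ = 0 := by simp [hw, Real.zero_rpow hβpos.ne']
    simp only [mem_ofPred_eq, hw0, Pi.sub_apply] at h
    linarith
  have hzball : z ∈ ball x₀ R := by
    by_contra hnot
    have hsph : z ∈ sphere x₀ R :=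
      le_antisymm hz (not_lt.mp hnot)
    have h := hbd z hsph
    have hwz : w z = (k₁ * ((1 - p) ^ 2 / (2 * ((N : ℝ) * (1 - p) + 2 * p))) * c * R ^ 2)
            ^ (1 / (1 - p)) := by
      rw [← hβ, show k₁ * ((1 - p) ^ 2 / (2 * ((N : ℝ) * (1 - p) + 2 * p))) * c * R ^ 2
        = K * R ^ 2 by rw [hK]; ring, Real.mul_rpow hKpos.le (by positivity)]
      simp only [hw]
      rw [← dist_eq_norm, mem_sphere.mp hsph]
    linarith
  have hball : ball x₀ R ∈ nhds z := isOpen_ball.mem_nhds hzball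
  have hline : ∀ i : Fin N, Filter.Tendsto
      (fun t : ℝ => z + t • EuclideanSpace.single i (1 : ℝ)) (nhds 0) (nhds z) := by
    intro i
    have : Continuous (fun t : ℝ => z + t • EuclideanSpace.single i (1 : ℝ)) := by fun_prop
    simpa using this.tendsto 0
  have hlinederiv : ∀ (i : Fin N) (t : ℝ), HasDerivAt
      (fun t : ℝ => z + t • EuclideanSpace.single i (1 : ℝ)) (EuclideanSpace.single i (1 : ℝ)) t := by
    intro i t
    simpa using ((hasDerivAt_id t).smul_const (EuclideanSpace.single i (1 : ℝ))).const_add z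
  -- On the line through `z` in direction `i` the barrier is the one-variable function above.
  have hwline : ∀ (i : Fin N) (t : ℝ), w (z + t • EuclideanSpace.single i (1 : ℝ)) =
      K ^ β * (‖z - x₀‖ ^ 2 + 2 * t * (z - x₀) i + t ^ 2) ^ β := by
    intro i t
    simp only [hw]
    rw [add_sub_right_comm, norm_add_sq_real, inner_smul_right, EuclideanSpace.inner_single_right,
      norm_smul, mul_pow]
    simp
    left; congr 1; ring
  have hkey : ∀ i : Fin N,
      fderiv ℝ (fun y => fderiv ℝ u y (EuclideanSpace.single i 1)) z (EuclideanSpace.single i 1) ≤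
      K ^ β * β * (4 * (β - 1) * (‖z - x₀‖ ^ 2) ^ (β - 2) * (z - x₀) i ^ 2
        + 2 * (‖z - x₀‖ ^ 2) ^ (β - 1)) := by
    intro i
    have hmax : IsLocalMax (fun t : ℝ => u (z + t • EuclideanSpace.single i (1 : ℝ)) -
        K ^ β * (‖z - x₀‖ ^ 2 + 2 * t * (z - x₀) i + t ^ 2) ^ β) 0 := by
      filter_upwards [hline i hball] with t ht
      have h := hzmax (ball_subset_closedBall ht)
      rw [← hwline, ← hwline]
      simpa using h
    have hd1 : ∀ᶠ t in nhds (0 : ℝ), HasDerivAt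
        (fun t : ℝ => u (z + t • EuclideanSpace.single i (1 : ℝ)) -
          K ^ β * (‖z - x₀‖ ^ 2 + 2 * t * (z - x₀) i + t ^ 2) ^ β)
        (fderiv ℝ u (z + t • EuclideanSpace.single i (1 : ℝ)) (EuclideanSpace.single i 1) -
          K ^ β * ((2 * (z - x₀) i + 2 * t) * β *
            (‖z - x₀‖ ^ 2 + 2 * t * (z - x₀) i + t ^ 2) ^ (β - 1))) t := by
      filter_upwards [hline i hball] with t ht
      have hu : DifferentiableAt ℝ u (z + t • EuclideanSpace.single i (1 : ℝ)) :=
        (hdiff.contDiffAt (isOpen_ball.mem_nhds ht)).differentiableAt (by norm_num)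
      exact (hu.hasFDerivAt.comp_hasDerivAt t (hlinederiv i t)).sub
        (barrier_fst_deriv _ _ _ _ _ hβ1)
    have hd2u : HasDerivAt (fun t : ℝ =>
        fderiv ℝ u (z + t • EuclideanSpace.single i (1 : ℝ)) (EuclideanSpace.single i 1))
        (fderiv ℝ (fun y => fderiv ℝ u y (EuclideanSpace.single i 1)) z
          (EuclideanSpace.single i 1)) 0 := by
      have hfd : DifferentiableAt ℝ (fderiv ℝ u) z :=
        ((hdiff.contDiffAt hball).fderiv_right (m := 1) (by norm_num)).differentiableAt
          (by norm_num)
      have hg : DifferentiableAt ℝ (fun y => fderiv ℝ u y (EuclideanSpace.single i 1)) z :=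
        hfd.clm_apply (differentiableAt_const _)
      have hg' := hg.hasFDerivAt
      exact HasFDerivAt.comp_hasDerivAt_of_eq 0 hg' (hlinederiv i 0) (by simp)
    have hd2 := hd2u.sub (barrier_snd_deriv (K ^ β) (‖z - x₀‖ ^ 2) ((z - x₀) i) β hβ1 (by
      intro h
      have h : z - x₀ = 0 := by simpa using h
      simp [h]))
    have := snd_deriv_nonpos_of_max hmax hd1 hd2
    linarith
  have hsum : lap u z ≤ k₁ * c * w z ^ p := by
    rw [← barrier_laplacian hN p (k₁ * c) (‖z - x₀‖ ^ 2) hp hp1 (by positivity) (by positivity)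
      (fun i => (z - x₀) i) (by rw [EuclideanSpace.real_norm_sq_eq]) K hK β hβ]
    exact Finset.sum_le_sum fun i _ => hkey i
  have hlt : w z ^ p < u z ^ p :=
    Real.rpow_lt_rpow (by simp only [hw]; positivity) hzpos hp
  have := mul_lt_mul_of_pos_left hlt (mul_pos hk₁ hc)
  linarith [hlap z hzball]
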